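/- arXiv:2204.02702 — 3 statements merged into one kernel-verified Lean document; each statement's English description precedes it below -/
import Mathlib

section
/- Every zero of the entire function f₄(z) = Σ_{k=0}^∞ z^{k+1}/(k!·(k+1)!) is real and non-positive: if z ∈ ℂ and f₄(z) = 0, then z is real and z ≤ 0. -/
/-!
The function `f = f₄` solves `z f'' = f`. If `f z₀ = 0`, put `g t = f (t z₀)` for `t ∈ [0, 1]`, so that
`g` vanishes at both ends. Integrating `(g' * conj g)' = |g'|² + g'' * conj g` over `[0, 1]` would give
`0 = ∫ |g'|² + z₀ ∫ |g|² / t`, forcing `z₀` to be real and non-positive.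

To avoid integrals and the division by `t`, write `f z = z * u z` and `f' = J`, `J' = u`, with
`J z = ∑ z^k / k!²` and `u z = ∑ z^k / (k! (k+1)!)`. Then `g' * conj g` has derivative
`|z₀|² (|J|² + z₀ t |u|²)`. If `z₀` is not a non-positive real, some `c` has `0 ≤ re c` and
`0 < re (c z₀)`, and `re (c * g' * conj g)` is monotone on `[0, 1]` with value `0` at both ends. Its
derivative therefore vanishes on `(0, 1)`, so `u (t z₀) = 0` there, against `u 0 = 1`.
-/

open Complex Filter

/-- The sum of the power series with coefficients `a`. -/
noncomputable def powerSum (a : ℕ → ℂ) (z : ℂ) : ℂ := ∑' k : ℕ, a k * z ^ k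

lemma powerSum_zero (a : ℕ → ℂ) : powerSum a 0 = a 0 := by
  unfold powerSum
  rw [tsum_eq_single 0]
  · simp
  · intro k hk
    simp [hk]

lemma summable_powerSum {a : ℕ → ℂ} (ha : ∀ k, ‖a k‖ ≤ 1 / (k.factorial : ℝ)) (z : ℂ) :
    Summable fun k => a k * z ^ k := by
  refine Summable.of_norm_bounded (Real.summable_pow_div_factorial ‖z‖) fun k => ?_
  rw [norm_mul, norm_pow]
  calc ‖a k‖ * ‖z‖ ^ k ≤ 1 / (k.factorial : ℝ) * ‖z‖ ^ k := by gcongr; exact ha k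
    _ = _ := by ring

/-- Termwise differentiation, for coefficients dominated by those of the exponential series. -/
lemma hasDerivAt_powerSum {a : ℕ → ℂ} (ha : ∀ k, ‖a k‖ ≤ 1 / (k.factorial : ℝ)) (z : ℂ) :
    HasDerivAt (powerSum a) (powerSum (fun k => (k + 1) * a (k + 1)) z) z := by
  have hR : 0 < ‖z‖ + 1 := by positivity
  have key : HasDerivAt (powerSum a) (∑' k : ℕ, a k * (k * z ^ (k - 1))) z := by
    refine hasDerivAt_tsum_of_isPreconnected (t := Metric.ball (0 : ℂ) (‖z‖ + 1)) (y₀ := 0)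
      (u := fun k : ℕ => 1 / (k.factorial : ℝ) * (k * (‖z‖ + 1) ^ (k - 1)))
      ?_ Metric.isOpen_ball (convex_ball _ _).isPreconnected
      (fun k y _ => (hasDerivAt_pow k y).const_mul (a k)) ?_ (by simpa using hR)
      (summable_powerSum ha 0) (by simp)
    · rw [← summable_nat_add_iff 1]
      refine (Real.summable_pow_div_factorial (‖z‖ + 1)).congr fun k => ?_
      have : (k.factorial : ℝ) ≠ 0 := by positivity
      rw [Nat.factorial_succ]
      push_cast
      field_simp
    · intro k y hy
      have hy' : ‖y‖ ≤ ‖z‖ + 1 := by simpa using (Metric.mem_ball.1 hy).le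
      rw [norm_mul, norm_mul, norm_pow, Complex.norm_natCast]
      gcongr
      exact ha k
  convert key using 1
  have hs : Summable fun k : ℕ => (((k : ℂ) + 1) * a (k + 1)) * z ^ k := by
    refine Summable.of_norm_bounded (Real.summable_pow_div_factorial ‖z‖) fun k => ?_
    have h1 : ‖(k : ℂ) + 1‖ = (k : ℝ) + 1 := by
      exact_mod_cast Complex.norm_natCast (k + 1)
    have hk : (k.factorial : ℝ) ≠ 0 := by positivity
    rw [norm_mul, norm_mul, norm_pow, h1]
    calc ((k : ℝ) + 1) * ‖a (k + 1)‖ * ‖z‖ ^ k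
        ≤ ((k : ℝ) + 1) * (1 / ((k + 1).factorial : ℝ)) * ‖z‖ ^ k := by gcongr; exact ha _
      _ = _ := by
        rw [Nat.factorial_succ]
        push_cast
        field_simp
  have hs' : Summable fun k : ℕ => a k * (k * z ^ (k - 1)) := by
    rw [← summable_nat_add_iff 1]
    refine hs.congr fun k => ?_
    rw [Nat.add_sub_cancel]
    push_cast
    ring
  rw [hs'.tsum_eq_zero_add]
  simp only [powerSum, Nat.cast_zero, zero_mul, mul_zero, zero_add, Nat.add_sub_cancel]
  refine tsum_congr fun k => ?_
  push_cast
  ring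

/-- The coefficients `k / k!²` of `f₄`; the one of index `k + 1` is `1 / (k! (k+1)!)`. -/
noncomputable def fCoeff (k : ℕ) : ℂ := k / (k.factorial : ℂ) ^ 2

/-- The coefficients `1 / k!²` of the derivative of `f₄`. -/
noncomputable def JCoeff (k : ℕ) : ℂ := 1 / (k.factorial : ℂ) ^ 2

/-- The coefficients `1 / (k! (k+1)!)` of the second derivative of `f₄`, which equals `f₄ z / z`. -/
noncomputable def uCoeff (k : ℕ) : ℂ := 1 / ((k.factorial : ℂ) * ((k + 1).factorial : ℂ))

lemma fCoeff_norm (k : ℕ) : ‖fCoeff k‖ ≤ 1 / (k.factorial : ℝ) := by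
  have h : (0 : ℝ) < k.factorial := by positivity
  have h2 : (k : ℝ) ≤ k.factorial := by exact_mod_cast Nat.self_le_factorial k
  simp only [fCoeff, norm_div, norm_pow, Complex.norm_natCast]
  rw [div_le_div_iff₀ (by positivity) h]
  nlinarith

lemma JCoeff_norm (k : ℕ) : ‖JCoeff k‖ ≤ 1 / (k.factorial : ℝ) := by
  have h2 : (1 : ℝ) ≤ k.factorial := by exact_mod_cast Nat.factorial_pos k
  simp only [JCoeff, norm_div, norm_pow, Complex.norm_natCast, norm_one]
  gcongr
  nlinarith

lemma uCoeff_norm (k : ℕ) : ‖uCoeff k‖ ≤ 1 / (k.factorial : ℝ) := by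
  have h1 : (1 : ℝ) ≤ k.factorial := by exact_mod_cast Nat.factorial_pos k
  have h2 : (1 : ℝ) ≤ (k + 1).factorial := by exact_mod_cast Nat.factorial_pos (k + 1)
  simp only [uCoeff, norm_div, norm_mul, Complex.norm_natCast, norm_one]
  gcongr
  nlinarith

lemma fCoeff_succ (k : ℕ) : fCoeff (k + 1) = uCoeff k := by
  have h : (k.factorial : ℂ) ≠ 0 := by exact_mod_cast k.factorial_ne_zero
  have h' : (k : ℂ) + 1 ≠ 0 := by exact_mod_cast k.succ_ne_zero
  simp only [fCoeff, uCoeff, Nat.factorial_succ]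
  push_cast
  field_simp

lemma hasDerivAt_f (z : ℂ) : HasDerivAt (powerSum fCoeff) (powerSum JCoeff z) z := by
  convert hasDerivAt_powerSum fCoeff_norm z using 2
  ext k
  have h : (k.factorial : ℂ) ≠ 0 := by exact_mod_cast k.factorial_ne_zero
  have h' : (k : ℂ) + 1 ≠ 0 := by exact_mod_cast k.succ_ne_zero
  simp only [fCoeff, JCoeff, Nat.factorial_succ]
  push_cast
  field_simp

lemma hasDerivAt_J (z : ℂ) : HasDerivAt (powerSum JCoeff) (powerSum uCoeff z) z := by
  convert hasDerivAt_powerSum JCoeff_norm z using 2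
  ext k
  have h : (k.factorial : ℂ) ≠ 0 := by exact_mod_cast k.factorial_ne_zero
  have h' : (k : ℂ) + 1 ≠ 0 := by exact_mod_cast k.succ_ne_zero
  simp only [uCoeff, JCoeff, Nat.factorial_succ]
  push_cast
  field_simp

lemma f_eq_mul_u (z : ℂ) : powerSum fCoeff z = z * powerSum uCoeff z := by
  unfold powerSum
  rw [(summable_powerSum fCoeff_norm z).tsum_eq_zero_add, ← tsum_mul_left]
  have h0 : fCoeff 0 = 0 := by simp [fCoeff]
  rw [h0, zero_mul, zero_add]
  refine tsum_congr fun k => ?_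
  rw [fCoeff_succ]
  ring

/-- The derivative of `re (c * g' * conj g)` along the segment from `0` to `z`, where
`g t = f₄ (t z)`. -/
lemma hasDerivAt_energy (c z : ℂ) (t : ℝ) :
    HasDerivAt (fun t : ℝ => (c * (z * powerSum JCoeff (t * z) *
        star (powerSum fCoeff (t * z)))).re)
      (normSq z * (c.re * normSq (powerSum JCoeff (t * z)) +
        (c * z).re * (t * normSq (powerSum uCoeff (t * z))))) t := by
  have hl : HasDerivAt (fun t : ℝ => (t : ℂ) * z) z t := by
    simpa using (Complex.ofRealCLM.hasDerivAt (x := t)).mul_const z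
  have hJ := (hasDerivAt_J (t * z)).comp t hl
  have hf := ((hasDerivAt_f (t * z)).comp t hl).star
  have hW := ((hJ.const_mul z).mul hf).const_mul c
  have hV := Complex.reCLM.hasFDerivAt.comp_hasDerivAt t hW
  refine HasDerivAt.congr_deriv (f' := _) hV ?_
  simp only [Function.comp_apply, Complex.reCLM_apply, f_eq_mul_u]
  simp [normSq_apply]
  ring

theorem f4_zeros_real_nonpositive (z : ℂ)
    (hz : (∑' k : ℕ, z ^ (k + 1) / ((k.factorial : ℂ) * ((k + 1).factorial : ℂ))) = 0) :
    z.im = 0 ∧ z.re ≤ 0 := by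
  have hfz : powerSum fCoeff z = 0 := by
    rw [f_eq_mul_u, powerSum, ← tsum_mul_left, ← hz]
    refine tsum_congr fun k => ?_
    simp only [uCoeff]
    ring
  by_contra hcon
  have hz0 : z ≠ 0 := by
    rintro rfl
    simp at hcon
  -- `c` rotates `z` into the open right half-plane while staying in the closed one.
  obtain ⟨c, hc, hcz⟩ : ∃ c : ℂ, 0 ≤ c.re ∧ 0 < (c * z).re := by
    by_cases him : z.im = 0
    · refine ⟨1, by simp, ?_⟩
      by_contra h
      exact hcon ⟨him, by simpa using h⟩
    · refine ⟨⟨0, -z.im⟩, by simp, ?_⟩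
      simpa using mul_self_pos.2 him
  have hn : 0 < normSq z := normSq_pos.2 hz0
  set V : ℝ → ℝ := fun t => (c * (z * powerSum JCoeff (t * z) *
        star (powerSum fCoeff (t * z)))).re with hV
  have hd := hasDerivAt_energy c z
  have hmono : MonotoneOn V (Set.Icc 0 1) := by
    refine monotoneOn_of_deriv_nonneg (convex_Icc 0 1)
      (fun t _ => (hd t).continuousAt.continuousWithinAt)
      (fun t _ => (hd t).differentiableAt.differentiableWithinAt) fun t ht => ?_
    rw [interior_Icc] at ht
    rw [(hd t).deriv]
    have h1 := normSq_nonneg (powerSum JCoeff (t * z))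
    have h2 := normSq_nonneg (powerSum uCoeff (t * z))
    have h3 := ht.1.le
    positivity
  have hV0 : V 0 = 0 := by simp [hV, f_eq_mul_u]
  have hV1 : V 1 = 0 := by simp [hV, hfz]
  have hVt : ∀ t ∈ Set.Ioo (0 : ℝ) 1, V t = 0 := by
    intro t ht
    have hm := Set.Ioo_subset_Icc_self ht
    have h1 := hmono (by simp) hm ht.1.le
    have h2 := hmono hm (by simp) ht.2.le
    linarith
  have hu : ∀ t ∈ Set.Ioo (0 : ℝ) 1, powerSum uCoeff (t * z) = 0 := by
    intro t ht
    have hev : V =ᶠ[nhds t] fun _ => 0 :=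
      Filter.eventually_of_mem (Ioo_mem_nhds ht.1 ht.2) hVt
    have h0 := (hd t).unique ((hasDerivAt_const t (0 : ℝ)).congr_of_eventuallyEq hev)
    have h1 := normSq_nonneg (powerSum JCoeff (t * z))
    by_contra hne
    have h2 := normSq_pos.2 hne
    have h3 := ht.1
    have : 0 < normSq z * (c.re * normSq (powerSum JCoeff (t * z)) +
        (c * z).re * (t * normSq (powerSum uCoeff (t * z)))) := by positivity
    exact this.ne' h0
  have hcont : Continuous fun t : ℝ => powerSum uCoeff (t * z) := by
    have : Continuous (powerSum uCoeff) :=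
      continuous_iff_continuousAt.2 fun w => (hasDerivAt_powerSum uCoeff_norm w).continuousAt
    fun_prop
  have hlim : Tendsto (fun t : ℝ => powerSum uCoeff (t * z)) (nhdsWithin 0 (Set.Ioi 0))
      (nhds 1) := by
    have h := (hcont.tendsto 0).mono_left (nhdsWithin_le_nhds (s := Set.Ioi 0))
    simpa [powerSum_zero, uCoeff] using h
  have hlim0 : Tendsto (fun t : ℝ => powerSum uCoeff (t * z)) (nhdsWithin 0 (Set.Ioi 0))
      (nhds 0) :=
    tendsto_const_nhds.congr' (Filter.eventually_of_mem
      (Ioo_mem_nhdsGT (zero_lt_one' ℝ)) fun t ht => (hu t ht).symm)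
  exact one_ne_zero (tendsto_nhds_unique hlim hlim0)
end

section
/- Every zero of the derivative of the entire function f₄(z) = Σ_{k=0}^∞ z^{k+1}/(k!·(k+1)!) is real and non-positive: if z ∈ ℂ and f₄'(z) = 0, then z is real and z ≤ 0. -/
/-!
Write `f` for the given function and `g w = Σ w^k/(k!)²`. Termwise differentiation gives `f' = g`
and `f w = w g'(w)`, so that `(w g')' = g`. If `g c = 0`, put `W t = f (ct) · conj (g (ct))` for
`t ∈ [0, 1]`. Then `W 0 = W 1 = 0` because `f 0 = 0` and `g c = 0`, while
`W' t = c |g (ct)|² + t |c g' (ct)|²`. Integrating yields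
`c ∫ |g (ct)|² dt = - ∫ t |c g' (ct)|² dt`, and the integral on the left is positive
since `g 0 = 1`; hence `c` is real and non-positive.
-/

open Complex Filter

/-- The function `Σ w^k/(k!)²`, which is the derivative of `f4`. -/
noncomputable def f4g (w : ℂ) : ℂ :=
  ∑' k : ℕ, w ^ k / ((k.factorial : ℂ) * (k.factorial : ℂ))

/-- The function `Σ w^(k+1)/(k!(k+1)!)`. -/
noncomputable def f4 (w : ℂ) : ℂ :=
  ∑' k : ℕ, w ^ (k + 1) / ((k.factorial : ℂ) * ((k + 1).factorial : ℂ))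

/-- Majorant for the terms of both series on the ball of radius `R`. -/
lemma f4_term_bound (R : ℝ) (w : ℂ) (hw : ‖w‖ ≤ R) (n k l : ℕ) :
    ‖w ^ n / ((k.factorial : ℂ) * (l.factorial : ℂ))‖ ≤ R ^ n / k.factorial := by
  have h1 : (1 : ℝ) ≤ l.factorial := by exact_mod_cast l.factorial_pos
  have h2 : (0 : ℝ) < k.factorial := by exact_mod_cast k.factorial_pos
  rw [norm_div, norm_mul, norm_pow, norm_natCast, norm_natCast]
  have hR : 0 ≤ R := (norm_nonneg w).trans hw
  gcongr
  nlinarith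

lemma f4g_bound (R : ℝ) (k : ℕ) (w : ℂ) (hw : w ∈ Metric.ball (0 : ℂ) R) :
    ‖w ^ k / ((k.factorial : ℂ) * (k.factorial : ℂ))‖ ≤ R ^ k / k.factorial :=
  f4_term_bound R w (by simpa using (mem_ball_zero_iff.1 hw).le) k k k

lemma f4_bound (R : ℝ) (k : ℕ) (w : ℂ) (hw : w ∈ Metric.ball (0 : ℂ) R) :
    ‖w ^ (k + 1) / ((k.factorial : ℂ) * ((k + 1).factorial : ℂ))‖ ≤
      R ^ (k + 1) / k.factorial :=
  f4_term_bound R w (by simpa using (mem_ball_zero_iff.1 hw).le) (k + 1) k (k + 1)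

lemma f4_summable_majorant (R : ℝ) : Summable fun k : ℕ => R ^ (k + 1) / k.factorial := by
  refine ((Real.summable_pow_div_factorial R).mul_left R).congr fun k => ?_
  ring

lemma mem_ball_norm_add_one (z : ℂ) : z ∈ Metric.ball (0 : ℂ) (‖z‖ + 1) := by
  simp

lemma differentiable_f4g : Differentiable ℂ f4g := fun z =>
  (differentiableOn_tsum_of_summable_norm (Real.summable_pow_div_factorial (‖z‖ + 1))
    (fun k => by fun_prop) Metric.isOpen_ball
    (f4g_bound (‖z‖ + 1))).differentiableAt
      (Metric.isOpen_ball.mem_nhds (mem_ball_norm_add_one z))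

lemma differentiable_f4 : Differentiable ℂ f4 := fun z =>
  (differentiableOn_tsum_of_summable_norm (f4_summable_majorant (‖z‖ + 1))
    (fun k => by fun_prop) Metric.isOpen_ball
    (f4_bound (‖z‖ + 1))).differentiableAt
      (Metric.isOpen_ball.mem_nhds (mem_ball_norm_add_one z))

lemma deriv_f4 (z : ℂ) : deriv f4 z = f4g z := by
  have h := hasSum_deriv_of_summable_norm (f4_summable_majorant (‖z‖ + 1))
    (fun k => by fun_prop) Metric.isOpen_ball
    (f4_bound (‖z‖ + 1)) (mem_ball_norm_add_one z)
  refine h.tsum_eq.symm.trans (tsum_congr fun k => ?_)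
  have hk : (k.factorial : ℂ) ≠ 0 := by exact_mod_cast k.factorial_ne_zero
  have hk1 : (k : ℂ) + 1 ≠ 0 := by exact_mod_cast k.succ_ne_zero
  rw [deriv_div_const, deriv_pow_field, Nat.factorial_succ]
  push_cast
  field_simp

lemma mul_deriv_f4g (z : ℂ) : z * deriv f4g z = f4 z := by
  have h := hasSum_deriv_of_summable_norm (Real.summable_pow_div_factorial (‖z‖ + 1))
    (fun k => by fun_prop) Metric.isOpen_ball
    (f4g_bound (‖z‖ + 1)) (mem_ball_norm_add_one z)
  have h' := h.mul_left z
  -- the constant term of the series of `f4g` is killed by the derivative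
  rw [← hasSum_nat_add_iff' 1] at h'
  simp only [Finset.range_one, Finset.sum_singleton, pow_zero, deriv_const, mul_zero,
    sub_zero] at h'
  refine h'.tsum_eq.symm.trans (tsum_congr fun k => ?_)
  have hk : (k.factorial : ℂ) ≠ 0 := by exact_mod_cast k.factorial_ne_zero
  have hk1 : (k : ℂ) + 1 ≠ 0 := by exact_mod_cast k.succ_ne_zero
  rw [deriv_div_const, deriv_pow_field, Nat.factorial_succ]
  push_cast
  field_simp
  ring

lemma f4g_zero : f4g 0 = 1 := by
  unfold f4g
  rw [tsum_eq_single 0 (fun k hk => by simp [hk])]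
  simp

lemma f4_zero : f4 0 = 0 := by
  rw [← mul_deriv_f4g, zero_mul]

/-- The derivative of `W t = f4 (ct) · conj (f4g (ct))`. -/
lemma hasDerivAt_f4_mul_conj (c : ℂ) (t : ℝ) :
    HasDerivAt (fun t : ℝ => f4 (c * t) * (starRingEnd ℂ) (f4g (c * t)))
      (c * (normSq (f4g (c * t)) : ℝ) + ((t * normSq (c * deriv f4g (c * t)) : ℝ) : ℂ)) t := by
  have hl : HasDerivAt (fun t : ℝ => c * (t : ℂ)) c t := by
    simpa using (ofRealCLM.hasDerivAt (x := t)).const_mul c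
  have hf : HasDerivAt (fun t : ℝ => f4 (c * t)) (f4g (c * t) * c) t := by
    have := (differentiable_f4 (c * t)).hasDerivAt
    rw [deriv_f4] at this
    exact this.comp t hl
  have hd := (differentiable_f4g (c * t)).hasDerivAt
  have hg : HasDerivAt (fun t : ℝ => f4g (c * t)) (deriv f4g (c * t) * c) t := by
    have := hd.comp t hl
    exact this
  have hg' : HasDerivAt (fun t : ℝ => (starRingEnd ℂ) (f4g (c * t)))
      ((starRingEnd ℂ) (deriv f4g (c * t) * c)) t := hg.star
  refine (hf.mul hg').congr_deriv ?_
  rw [← mul_deriv_f4g (c * t)]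
  push_cast
  rw [← mul_conj, ← mul_conj]
  simp only [map_mul]
  ring

/-- Every zero of the derivative of the entire function
`f₄(z) = Σ_{k≥0} z^{k+1}/(k!(k+1)!)` is real and non-positive. -/
theorem f4_deriv_zeros_real_nonpositive (z : ℂ)
    (hz : deriv
        (fun w : ℂ => ∑' k : ℕ, w ^ (k + 1) / ((k.factorial : ℂ) * ((k + 1).factorial : ℂ))) z
      = 0) :
    z.im = 0 ∧ z.re ≤ 0 := by
  have hgz : f4g z = 0 := (deriv_f4 z).symm.trans hz
  have hc : Continuous f4g := differentiable_f4g.continuous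
  have hc' : Continuous (deriv f4g) :=
    (differentiable_f4g.contDiff (n := 1)).continuous_deriv le_rfl
  have hA : Continuous fun t : ℝ => normSq (f4g (z * t)) := by
    have := continuous_normSq
    fun_prop
  have hB : Continuous fun t : ℝ => t * normSq (z * deriv f4g (z * t)) := by
    have := continuous_normSq
    fun_prop
  have hI := intervalIntegral.integral_eq_sub_of_hasDerivAt (a := 0) (b := 1)
    (fun t _ => hasDerivAt_f4_mul_conj z t)
    (Continuous.intervalIntegrable (by fun_prop) 0 1)
  rw [intervalIntegral.integral_add (Continuous.intervalIntegrable (by fun_prop) 0 1)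
    (Continuous.intervalIntegrable (by fun_prop) 0 1), intervalIntegral.integral_const_mul,
    intervalIntegral.integral_ofReal, intervalIntegral.integral_ofReal] at hI
  simp only [ofReal_one, ofReal_zero, mul_one, mul_zero, hgz, f4_zero, map_zero, zero_mul,
    sub_zero] at hI
  have hApos : 0 < ∫ t in (0 : ℝ)..1, normSq (f4g (z * t)) :=
    intervalIntegral.integral_pos one_pos hA.continuousOn (fun _ _ => normSq_nonneg _)
      ⟨0, by simp, by simp [f4g_zero]⟩
  have hBnn : 0 ≤ ∫ t in (0 : ℝ)..1, t * normSq (z * deriv f4g (z * t)) :=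
    intervalIntegral.integral_nonneg zero_le_one
      (fun t ht => mul_nonneg ht.1 (normSq_nonneg _))
  have hre := congrArg Complex.re hI
  have him := congrArg Complex.im hI
  simp only [add_re, add_im, re_mul_ofReal, im_mul_ofReal, ofReal_re, ofReal_im, zero_re,
    zero_im, add_zero] at hre him
  refine ⟨(mul_eq_zero.1 him).resolve_right hApos.ne', ?_⟩
  by_contra! hpos
  linarith [mul_pos hpos hApos]
end

section
/- Let N ≥ 1 and let u₁, v₁, u₂, v₂, …, u_N, v_N be real numbers with u_k < v_k for 1 ≤ k ≤ N and v_k < u_{k+1} for 1 ≤ k ≤ N−1. Let z ∈ ℂ with Im z > 0. Then for each k the quotient (v_k − z)/(u_k − z) has positive imaginary part, so its principal argument Arg((v_k − z)/(u_k − z)) lies in (0, π); moreover the total sum satisfies 0 < Σ_{k=1}^N Arg((v_k − z)/(u_k − z)) < π. -/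
/-!
For real `x`, the point `x - z` lies in the open lower half-plane, so `θ x = arg (x - z)` lies in
`(-π, 0)`. For `a < b` the quotient `(b - z) / (a - z)` lies in the upper half-plane, and its
argument is exactly `θ b - θ a` (`arg_quot_eq_sub`); in particular `θ` is strictly increasing.
The sum of the arguments is therefore the total increment of `θ` over the disjoint intervals
`[u k, v k]`, which is at most `θ (v N) - θ (u 1) < π` (`sum_arg_le`).
-/

open Complex Filter

theorem sub_im_neg {z : ℂ} (hz : 0 < z.im) (x : ℝ) : ((x : ℂ) - z).im < 0 := by
  simpa using hz

theorem sub_ne_zero_of_im_pos {z : ℂ} (hz : 0 < z.im) (x : ℝ) : (x : ℂ) - z ≠ 0 := by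
  intro h
  have := sub_im_neg hz x
  simp [h] at this

theorem quot_im_pos {z : ℂ} (hz : 0 < z.im) {a b : ℝ} (hab : a < b) :
    0 < (((b : ℂ) - z) / ((a : ℂ) - z)).im := by
  have hn : 0 < normSq ((a : ℂ) - z) := normSq_pos.2 (sub_ne_zero_of_im_pos hz a)
  have h : (((b : ℂ) - z) / ((a : ℂ) - z)).im
      = (b - a) * z.im / normSq ((a : ℂ) - z) := by
    rw [div_im]
    simp only [sub_re, sub_im, ofReal_re, ofReal_im]
    ring
  rw [h]
  exact div_pos (mul_pos (sub_pos.2 hab) hz) hn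

theorem arg_mem_Ioo_of_im_pos {w : ℂ} (hw : 0 < w.im) : arg w ∈ Set.Ioo 0 Real.pi := by
  refine ⟨lt_of_le_of_ne (arg_nonneg_iff.2 hw.le) fun h => ?_,
    lt_of_le_of_ne (arg_le_pi w) fun h => ?_⟩
  · exact hw.ne (arg_eq_zero_iff.1 h.symm).2.symm
  · exact hw.ne' (arg_eq_pi_iff.1 h).2

/-- No multiple of `2π` intervenes, because both arguments on the right lie in `(-π, 0)`, so that
their difference is already in the principal range. -/
theorem arg_quot_eq_sub {z : ℂ} (hz : 0 < z.im) (a b : ℝ) :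
    arg (((b : ℂ) - z) / ((a : ℂ) - z)) = arg ((b : ℂ) - z) - arg ((a : ℂ) - z) := by
  have hcoe := arg_div_coe_angle (sub_ne_zero_of_im_pos hz b) (sub_ne_zero_of_im_pos hz a)
  rw [← Real.Angle.coe_sub] at hcoe
  have ha := arg_neg_iff.2 (sub_im_neg hz a)
  have hb := arg_neg_iff.2 (sub_im_neg hz b)
  have ha' := neg_pi_lt_arg ((a : ℂ) - z)
  have hb' := neg_pi_lt_arg ((b : ℂ) - z)
  have h := congrArg Real.Angle.toReal hcoe
  rwa [arg_coe_angle_toReal_eq_arg,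
    Real.Angle.toReal_coe_eq_self_iff.2 ⟨by linarith, by linarith⟩] at h

theorem arg_sub_lt_arg_sub {z : ℂ} (hz : 0 < z.im) {a b : ℝ} (hab : a < b) :
    arg ((a : ℂ) - z) < arg ((b : ℂ) - z) := by
  have h := (arg_mem_Ioo_of_im_pos (quot_im_pos hz hab)).1
  rw [arg_quot_eq_sub hz] at h
  linarith

/-- The gaps `(v k, u (k + 1))` contribute positive increments of `x ↦ arg (x - z)`, so leaving
them out of the telescoping sum only decreases it. -/
theorem sum_arg_le {N : ℕ} {u v : ℕ → ℝ}
    (hvu : ∀ k, 1 ≤ k → k ≤ N - 1 → v k < u (k + 1))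
    {z : ℂ} (hz : 0 < z.im) {n : ℕ} (hn : 1 ≤ n) (hnN : n ≤ N) :
    ∑ k ∈ Finset.Icc 1 n, arg (((v k : ℂ) - z) / ((u k : ℂ) - z))
      ≤ arg ((v n : ℂ) - z) - arg ((u 1 : ℂ) - z) := by
  induction n, hn using Nat.le_induction with
  | base => simp [arg_quot_eq_sub hz]
  | succ n hn ih =>
    rw [Finset.sum_Icc_succ_top (by omega), arg_quot_eq_sub hz (u (n + 1))]
    have h := arg_sub_lt_arg_sub hz (hvu n hn (by omega))
    have := ih (by omega)
    linarith

/-- For interlaced real numbers `u₁ < v₁ < u₂ < ⋯ < u_N < v_N` and `z` in the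
upper half-plane, each quotient `(v_k - z)/(u_k - z)` has positive imaginary part, so its
principal argument lies in `(0,π)`; moreover the sum of these arguments lies in `(0,π)`. -/
theorem interlaced_arg_sum (N : ℕ) (hN : 1 ≤ N) (u v : ℕ → ℝ)
    (huv : ∀ k, 1 ≤ k → k ≤ N → u k < v k)
    (hvu : ∀ k, 1 ≤ k → k ≤ N - 1 → v k < u (k + 1))
    (z : ℂ) (hz : 0 < z.im) :
    (∀ k, 1 ≤ k → k ≤ N →
      0 < (((v k : ℂ) - z) / ((u k : ℂ) - z)).im ∧
      Complex.arg (((v k : ℂ) - z) / ((u k : ℂ) - z)) ∈ Set.Ioo 0 Real.pi) ∧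
    0 < ∑ k ∈ Finset.Icc 1 N, Complex.arg (((v k : ℂ) - z) / ((u k : ℂ) - z)) ∧
    ∑ k ∈ Finset.Icc 1 N, Complex.arg (((v k : ℂ) - z) / ((u k : ℂ) - z)) < Real.pi := by
  have hquot : ∀ k, 1 ≤ k → k ≤ N →
      0 < (((v k : ℂ) - z) / ((u k : ℂ) - z)).im ∧
      Complex.arg (((v k : ℂ) - z) / ((u k : ℂ) - z)) ∈ Set.Ioo 0 Real.pi := by
    intro k h1 h2
    have him := quot_im_pos hz (huv k h1 h2)
    exact ⟨him, arg_mem_Ioo_of_im_pos him⟩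
  refine ⟨hquot, ?_, ?_⟩
  · refine Finset.sum_pos (fun k hk => ?_) ⟨1, Finset.mem_Icc.2 ⟨le_rfl, hN⟩⟩
    obtain ⟨h1, h2⟩ := Finset.mem_Icc.1 hk
    exact (hquot k h1 h2).2.1
  · have h := sum_arg_le hvu hz hN le_rfl
    have hv := arg_neg_iff.2 (sub_im_neg hz (v N))
    have hu := neg_pi_lt_arg ((u 1 : ℂ) - z)
    linarith
end
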